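/- Let ρ = Σ_{i=1}^K α_i ρ₁^{(i)}⊗⋯⊗ρ_N^{(i)} be a separable state on ℂ^{d₁}⊗⋯⊗ℂ^{d_N}, where α_i > 0, Σ_i α_i = 1, and each ρ_n^{(i)} is a state on ℂ^{d_n}. Then for all positive integers S₁,…,S_N ≥ 1, the operator Σ_{i=1}^K α_i (ρ₁^{(i)})^{⊗S₁}⊗⋯⊗(ρ_N^{(i)})^{⊗S_N} is a positive semidefinite S₁×⋯×S_N-setting source operator for ρ. -/

import Mathlib

/-!
Tensor products of matrices multiply and take traces factor by factor. Pairing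
`⨂ₙ (σ n)^{⊗ S n}` with the operator carrying `X n` in one slot of each site `n` therefore gives
`tr (σ n * X n)` from that slot and `tr (σ n) = 1` from every other slot of the site, so the total
is `∏ n, tr (σ n * X n) = tr (⨂ₙ σ n * ⨂ₙ X n)`. Source operators are stable under real linear
combinations, and a tensor product of positive semidefinite matrices `(B i)ᴴ * B i` is again of the
form `Bᴴ * B`.
-/

open scoped ComplexOrder Matrix

namespace LqHV

/-- Entrywise tensor (Kronecker) product of a finite family of square complex matrices,
realized on the pi-type index. -/
def tprod {ι : Type} [Fintype ι] [DecidableEq ι] {κ : ι → Type} [∀ i, Fintype (κ i)]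
    (X : ∀ i, Matrix (κ i) (κ i) ℂ) : Matrix (∀ i, κ i) (∀ i, κ i) ℂ :=
  fun a b => ∏ i, X i (a i) (b i)

variable {N : ℕ}

/-- On the tensor product space `⊗_{n} (ℂ^{d n})^{⊗ S n}`, the operator acting as `X n` in
slot `k n` of site `n` and as the identity in all other slots. -/
def slot {d S : Fin N → ℕ} (X : ∀ n, Matrix (Fin (d n)) (Fin (d n)) ℂ) (k : ∀ n, Fin (S n)) :
    ∀ p : Σ n : Fin N, Fin (S n), Matrix (Fin (d p.1)) (Fin (d p.1)) ℂ :=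
  fun p => if p.2 = k p.1 then X p.1 else 1

/-- `T` is an `S₁ × ⋯ × S_N`-setting source operator for the state `ρ`. -/
def IsSourceOp (d S : Fin N → ℕ) (ρ : Matrix (∀ n, Fin (d n)) (∀ n, Fin (d n)) ℂ)
    (T : Matrix (∀ p : Σ n : Fin N, Fin (S n), Fin (d p.1))
          (∀ p : Σ n : Fin N, Fin (S n), Fin (d p.1)) ℂ) : Prop :=
  T.IsHermitian ∧
    ∀ (X : ∀ n, Matrix (Fin (d n)) (Fin (d n)) ℂ) (k : ∀ n, Fin (S n)),
      (T * tprod (slot X k)).trace = (ρ * tprod X).trace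

end LqHV

namespace LqHV

section TensorProduct

variable {ι : Type} [Fintype ι] [DecidableEq ι] {κ : ι → Type} [∀ i, Fintype (κ i)]

lemma tprod_mul_tprod (A B : ∀ i, Matrix (κ i) (κ i) ℂ) :
    tprod A * tprod B = tprod fun i => A i * B i := by
  ext a b
  simp only [tprod, Matrix.mul_apply, ← Finset.prod_mul_distrib, Fintype.prod_sum]

lemma trace_tprod (A : ∀ i, Matrix (κ i) (κ i) ℂ) : (tprod A).trace = ∏ i, (A i).trace :=
  (Fintype.prod_sum fun i j => A i j j).symm

lemma conjTranspose_tprod (A : ∀ i, Matrix (κ i) (κ i) ℂ) :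
    (tprod A)ᴴ = tprod fun i => (A i)ᴴ := by
  ext a b
  simp only [tprod, Matrix.conjTranspose_apply, star_prod]

lemma isHermitian_tprod {A : ∀ i, Matrix (κ i) (κ i) ℂ} (hA : ∀ i, (A i).IsHermitian) :
    (tprod A).IsHermitian :=
  (conjTranspose_tprod A).trans (congrArg tprod (funext hA))

open scoped MatrixOrder in
lemma posSemidef_tprod {A : ∀ i, Matrix (κ i) (κ i) ℂ} (hA : ∀ i, (A i).PosSemidef) :
    (tprod A).PosSemidef := by
  classical
  choose B hB using fun i => CStarAlgebra.nonneg_iff_eq_star_mul_self.mp (hA i).nonneg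
  have tprod_eq : tprod A = (tprod B)ᴴ * tprod B := by
    rw [conjTranspose_tprod, tprod_mul_tprod]
    exact congrArg tprod (funext hB)
  rw [tprod_eq]
  exact Matrix.posSemidef_conjTranspose_mul_self _

lemma posSemidef_sum_smul_tprod {J : Type*} {s : Finset J} {c : J → ℝ}
    {A : J → ∀ i, Matrix (κ i) (κ i) ℂ} (hc : ∀ j ∈ s, 0 ≤ c j)
    (hA : ∀ j ∈ s, ∀ i, (A j i).PosSemidef) :
    (∑ j ∈ s, (c j : ℂ) • tprod (A j)).PosSemidef :=
  Matrix.posSemidef_sum s fun j hj =>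
    (posSemidef_tprod (hA j hj)).smul (Complex.zero_le_real.mpr (hc j hj))

end TensorProduct

section SourceOperator

variable {d S : Fin N → ℕ}

lemma IsSourceOp.smul {ρ : Matrix (∀ n, Fin (d n)) (∀ n, Fin (d n)) ℂ}
    {T : Matrix (∀ p : Σ n : Fin N, Fin (S n), Fin (d p.1))
      (∀ p : Σ n : Fin N, Fin (S n), Fin (d p.1)) ℂ}
    (hT : IsSourceOp d S ρ T) {c : ℂ} (hc : IsSelfAdjoint c) :
    IsSourceOp d S (c • ρ) (c • T) := by
  refine ⟨hT.1.smul hc, fun X k => ?_⟩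
  simp only [Matrix.smul_mul, Matrix.trace_smul, hT.2 X k]

lemma IsSourceOp.sum {J : Type*} {s : Finset J}
    {ρ : J → Matrix (∀ n, Fin (d n)) (∀ n, Fin (d n)) ℂ}
    {T : J → Matrix (∀ p : Σ n : Fin N, Fin (S n), Fin (d p.1))
      (∀ p : Σ n : Fin N, Fin (S n), Fin (d p.1)) ℂ}
    (hT : ∀ j ∈ s, IsSourceOp d S (ρ j) (T j)) :
    IsSourceOp d S (∑ j ∈ s, ρ j) (∑ j ∈ s, T j) := by
  refine ⟨isSelfAdjoint_sum s fun j hj => (hT j hj).1, fun X k => ?_⟩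
  simp only [Finset.sum_mul, Matrix.trace_sum]
  exact Finset.sum_congr rfl fun j hj => (hT j hj).2 X k

lemma prod_trace_mul_slot {n : Fin N} {A : Matrix (Fin (d n)) (Fin (d n)) ℂ} (hA : A.trace = 1)
    (X : ∀ n, Matrix (Fin (d n)) (Fin (d n)) ℂ) (k : ∀ n, Fin (S n)) :
    ∏ j, (A * slot X k ⟨n, j⟩).trace = (A * X n).trace := by
  rw [Fintype.prod_eq_single (k n) fun j hj => by simp [slot, hj, hA]]
  simp [slot]

lemma isSourceOp_tprod {σ : ∀ n, Matrix (Fin (d n)) (Fin (d n)) ℂ}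
    (hσ : ∀ n, (σ n).IsHermitian) (hσtr : ∀ n, (σ n).trace = 1) :
    IsSourceOp d S (tprod σ) (tprod fun p : Σ n : Fin N, Fin (S n) => σ p.1) := by
  refine ⟨isHermitian_tprod fun p => hσ p.1, fun X k => ?_⟩
  calc (tprod (fun p : Σ n : Fin N, Fin (S n) => σ p.1) * tprod (slot X k)).trace
      = ∏ p : Σ n : Fin N, Fin (S n), (σ p.1 * slot X k p).trace := by
        rw [tprod_mul_tprod, trace_tprod]
    _ = ∏ n, ∏ j, (σ n * slot X k ⟨n, j⟩).trace := Fintype.prod_sigma _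
    _ = ∏ n, (σ n * X n).trace :=
        Finset.prod_congr rfl fun n _ => prod_trace_mul_slot (hσtr n) X k
    _ = (tprod σ * tprod X).trace := by rw [tprod_mul_tprod, trace_tprod]

lemma isSourceOp_sum_smul_tprod {J : Type*} {s : Finset J} {c : J → ℝ}
    {σ : J → ∀ n, Matrix (Fin (d n)) (Fin (d n)) ℂ} (hσ : ∀ j ∈ s, ∀ n, (σ j n).IsHermitian)
    (hσtr : ∀ j ∈ s, ∀ n, (σ j n).trace = 1) :
    IsSourceOp d S (∑ j ∈ s, (c j : ℂ) • tprod (σ j))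
      (∑ j ∈ s, (c j : ℂ) • tprod fun p : Σ n : Fin N, Fin (S n) => σ j p.1) :=
  .sum fun j hj => (isSourceOp_tprod (hσ j hj) (hσtr j hj)).smul (Complex.conj_ofReal (c j))

end SourceOperator

end LqHV

open LqHV in
theorem separable_state_posSemidef_source_operator_general {N : ℕ} {J : Type*} (s : Finset J)
    (d S : Fin N → ℕ) (α : J → ℝ) (hα : ∀ i ∈ s, 0 ≤ α i)
    (ρs : J → ∀ n, Matrix (Fin (d n)) (Fin (d n)) ℂ)
    (hρs : ∀ i ∈ s, ∀ n, (ρs i n).PosSemidef) (hρstr : ∀ i ∈ s, ∀ n, (ρs i n).trace = 1) :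
    (∑ i ∈ s, (α i : ℂ) • tprod (fun p : Σ n : Fin N, Fin (S n) => ρs i p.1)).PosSemidef ∧
      IsSourceOp d S (∑ i ∈ s, (α i : ℂ) • tprod (fun n => ρs i n))
        (∑ i ∈ s, (α i : ℂ) • tprod (fun p : Σ n : Fin N, Fin (S n) => ρs i p.1)) :=
  ⟨posSemidef_sum_smul_tprod hα fun i hi p => hρs i hi p.1,
    isSourceOp_sum_smul_tprod (fun i hi n => (hρs i hi n).isHermitian) hρstr⟩

open LqHV in
/-- For a separable state `ρ = ∑ i, α i • (ρ₁⁽ⁱ⁾ ⊗ ⋯ ⊗ ρ_N⁽ⁱ⁾)` on `ℂ^{d₁} ⊗ ⋯ ⊗ ℂ^{d_N}`,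
the operator `∑ i, α i • ((ρ₁⁽ⁱ⁾)^{⊗S₁} ⊗ ⋯ ⊗ (ρ_N⁽ⁱ⁾)^{⊗S_N})` is a positive semidefinite
`S₁ × ⋯ × S_N`-setting source operator for `ρ`, for all `S₁, …, S_N ≥ 1`. -/
theorem separable_state_posSemidef_source_operator {N K : ℕ} (d S : Fin N → ℕ)
    (hS : ∀ n, 1 ≤ S n) (α : Fin K → ℝ) (hα : ∀ i, 0 < α i) (hα1 : ∑ i, α i = 1)
    (ρs : Fin K → ∀ n, Matrix (Fin (d n)) (Fin (d n)) ℂ)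
    (hρs : ∀ i n, (ρs i n).PosSemidef) (hρstr : ∀ i n, (ρs i n).trace = 1) :
    ((∑ i, (α i : ℂ) • tprod (fun p : Σ n : Fin N, Fin (S n) => ρs i p.1)).PosSemidef) ∧
      IsSourceOp d S (∑ i, (α i : ℂ) • tprod (fun n => ρs i n))
        (∑ i, (α i : ℂ) • tprod (fun p : Σ n : Fin N, Fin (S n) => ρs i p.1)) :=
  separable_state_posSemidef_source_operator_general Finset.univ d S α (fun i _ => (hα i).le) ρs
    (fun i _ => hρs i) (fun i _ => hρstr i)
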